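/- Fix D ∈ ℍ^{m×n}, Ω ⊆ Fin m × Fin n, and λ > 0. Let Z^k = (A^k, B^k, X^k) satisfy the LRQD recurrences (X^k_{ij} = D_{ij} on Ω and = (A^k·B^k)_{ij} off Ω; A^{k+1} = (X^k·(B^k)ᴴ + λ·A^k)·(B^k·(B^k)ᴴ + λ·I)⁻¹; B^{k+1} = ((A^{k+1})ᴴ·A^{k+1} + λ·I)⁻¹·((A^{k+1})ᴴ·X^k + λ·B^k)), let f(A,B,X) = ½‖A·B − X‖_F², and assume {Z^k} is bounded. Assume further that for every limit point Z# of {Z^k} there exist θ ∈ [1/2, 1), μ > 0 and ρ > 0 such that |f(Z) − f(Z#)|^θ ≤ μ·G(Z) for every triple Z = (A,B,X) with X_{ij} = D_{ij} on Ω and ‖Z − Z#‖ ≤ ρ. Then ∑_{k=0}^∞ ‖Z^k − Z^{k+1}‖ < ∞; in particular the whole sequence {Z^k} converges to a limit. -/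

import Mathlib

open scoped Quaternion Matrix
open Filter

/-- The Frobenius norm of a quaternion matrix. -/
noncomputable def frob {m n : ℕ} (A : Matrix (Fin m) (Fin n) ℍ[ℝ]) : ℝ :=
  Real.sqrt (∑ i, ∑ j, ‖A i j‖ ^ 2)

/-- The norm of a triple (A, B, X). -/
noncomputable def tnorm {m r n : ℕ} (A : Matrix (Fin m) (Fin r) ℍ[ℝ])
    (B : Matrix (Fin r) (Fin n) ℍ[ℝ]) (X : Matrix (Fin m) (Fin n) ℍ[ℝ]) : ℝ :=
  Real.sqrt (frob A ^ 2 + frob B ^ 2 + frob X ^ 2)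

/-- The projected-gradient norm G(A,B,X). -/
noncomputable def pgnorm {m r n : ℕ} (Ω : Set (Fin m × Fin n)) [DecidablePred (· ∈ Ω)]
    (A : Matrix (Fin m) (Fin r) ℍ[ℝ]) (B : Matrix (Fin r) (Fin n) ℍ[ℝ])
    (X : Matrix (Fin m) (Fin n) ℍ[ℝ]) : ℝ :=
  Real.sqrt (frob ((A * B - X) * Bᴴ) ^ 2 + frob (Aᴴ * (A * B - X)) ^ 2 +
    ∑ p : Fin m × Fin n, if p ∈ Ω then 0 else ‖(X - A * B) p.1 p.2‖ ^ 2)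

section helpers

theorem frob_nonneg {m n : ℕ} (A : Matrix (Fin m) (Fin n) ℍ[ℝ]) : 0 ≤ frob A :=
  Real.sqrt_nonneg _

theorem frob_sq {m n : ℕ} (A : Matrix (Fin m) (Fin n) ℍ[ℝ]) :
    frob A ^ 2 = ∑ i, ∑ j, ‖A i j‖ ^ 2 :=
  Real.sq_sqrt (by positivity)

attribute [local instance] Matrix.frobeniusNormedAddCommGroup Matrix.frobeniusNormedSpace in
theorem frob_add_le {m n : ℕ} (A B : Matrix (Fin m) (Fin n) ℍ[ℝ]) :
    frob (A + B) ≤ frob A + frob B := by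
  have h : ∀ C : Matrix (Fin m) (Fin n) ℍ[ℝ], frob C = ‖C‖ := by
    intro C
    rw [Matrix.frobenius_norm_def, frob, Real.sqrt_eq_rpow]
    simp
  rw [h, h, h]
  exact norm_add_le A B

theorem frob_smul {m n : ℕ} (c : ℝ) (hc : 0 ≤ c) (A : Matrix (Fin m) (Fin n) ℍ[ℝ]) :
    frob (c • A) = c * frob A := by
  have h : frob (c • A) ^ 2 = (c * frob A) ^ 2 := by
    rw [mul_pow, frob_sq, frob_sq, Finset.mul_sum]
    refine Finset.sum_congr rfl fun i _ => ?_
    rw [Finset.mul_sum]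
    refine Finset.sum_congr rfl fun j _ => ?_
    rw [Matrix.smul_apply, norm_smul, mul_pow, Real.norm_eq_abs, sq_abs]
  exact (pow_left_inj₀ (frob_nonneg _) (mul_nonneg hc (frob_nonneg _)) two_ne_zero).1 h

theorem frob_conjT {m n : ℕ} (A : Matrix (Fin m) (Fin n) ℍ[ℝ]) : frob Aᴴ = frob A := by
  unfold frob
  rw [Finset.sum_comm]
  simp

theorem frob_neg {m n : ℕ} (A : Matrix (Fin m) (Fin n) ℍ[ℝ]) : frob (-A) = frob A := by
  simp [frob]

theorem frob_sub_comm {m n : ℕ} (A B : Matrix (Fin m) (Fin n) ℍ[ℝ]) :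
    frob (A - B) = frob (B - A) := by
  rw [← frob_neg, neg_sub]

theorem frob_mul_le {m n p : ℕ} (A : Matrix (Fin m) (Fin n) ℍ[ℝ])
    (B : Matrix (Fin n) (Fin p) ℍ[ℝ]) : frob (A * B) ≤ frob A * frob B := by
  refine le_of_sq_le_sq ?_ (mul_nonneg (frob_nonneg _) (frob_nonneg _))
  rw [mul_pow, frob_sq, frob_sq, frob_sq, Finset.sum_mul]
  refine Finset.sum_le_sum fun i _ => ?_
  rw [Finset.sum_comm, Finset.mul_sum]
  refine Finset.sum_le_sum fun j _ => ?_
  refine le_trans ?_ (Finset.sum_mul_sq_le_sq_mul_sq Finset.univ _ _)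
  refine pow_le_pow_left₀ (norm_nonneg _) ?_ 2
  rw [Matrix.mul_apply]
  refine (norm_sum_le _ _).trans (le_of_eq ?_)
  simp

theorem norm_le_frob {m n : ℕ} (A : Matrix (Fin m) (Fin n) ℍ[ℝ]) (i : Fin m) (j : Fin n) :
    ‖A i j‖ ≤ frob A := by
  refine le_of_sq_le_sq ?_ (frob_nonneg _)
  rw [frob_sq]
  refine le_trans ?_ (Finset.single_le_sum (f := fun i => ∑ j, ‖A i j‖ ^ 2)
    (fun _ _ => by positivity) (Finset.mem_univ i))
  exact Finset.single_le_sum (f := fun j => ‖A i j‖ ^ 2)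
    (fun _ _ => by positivity) (Finset.mem_univ j)

noncomputable def ipq {m n : ℕ} (U V : Matrix (Fin m) (Fin n) ℍ[ℝ]) : ℝ :=
  ∑ i, ∑ j, inner ℝ (U i j) (V i j)

theorem ipq_self {m n : ℕ} (U : Matrix (Fin m) (Fin n) ℍ[ℝ]) : ipq U U = frob U ^ 2 := by
  rw [frob_sq]; simp [ipq]

theorem frob_add_sq {m n : ℕ} (U V : Matrix (Fin m) (Fin n) ℍ[ℝ]) :
    frob (U + V) ^ 2 = frob U ^ 2 + 2 * ipq U V + frob V ^ 2 := by
  simp only [frob_sq, ipq, Finset.mul_sum, ← Finset.sum_add_distrib]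
  refine Finset.sum_congr rfl fun i _ => Finset.sum_congr rfl fun j _ => ?_
  rw [Matrix.add_apply, norm_add_sq_real]

theorem ipq_add {m n : ℕ} (U V W : Matrix (Fin m) (Fin n) ℍ[ℝ]) :
    ipq U (V + W) = ipq U V + ipq U W := by
  simp only [ipq, ← Finset.sum_add_distrib, Matrix.add_apply, inner_add_right]

theorem ipq_smul {m n : ℕ} (c : ℝ) (U V : Matrix (Fin m) (Fin n) ℍ[ℝ]) :
    ipq U (c • V) = c * ipq U V := by
  simp only [ipq, Finset.mul_sum, Matrix.smul_apply, real_inner_smul_right]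

theorem inner_mul_right_q (a b c : ℍ[ℝ]) : inner ℝ (a * b) c = inner ℝ a (c * star b) := by
  rw [Quaternion.inner_def, Quaternion.inner_def, star_mul, star_star, mul_assoc]

theorem re_mul_comm_q (a b : ℍ[ℝ]) : (a * b).re = (b * a).re := by
  rw [Quaternion.re_mul, Quaternion.re_mul]; ring

theorem inner_mul_left_q (a b c : ℍ[ℝ]) : inner ℝ (a * b) c = inner ℝ b (star a * c) := by
  rw [Quaternion.inner_def, Quaternion.inner_def, star_mul, star_star, mul_assoc,
    re_mul_comm_q, mul_assoc]

theorem ipq_mul_right {m n p : ℕ} (U : Matrix (Fin m) (Fin n) ℍ[ℝ])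
    (B : Matrix (Fin n) (Fin p) ℍ[ℝ]) (W : Matrix (Fin m) (Fin p) ℍ[ℝ]) :
    ipq (U * B) W = ipq U (W * Bᴴ) := by
  simp only [ipq, Matrix.mul_apply, sum_inner, inner_sum, Matrix.conjTranspose_apply,
    inner_mul_right_q]
  refine Finset.sum_congr rfl fun i _ => ?_
  rw [Finset.sum_comm]

theorem ipq_mul_left {m n p : ℕ} (A : Matrix (Fin m) (Fin n) ℍ[ℝ])
    (U : Matrix (Fin n) (Fin p) ℍ[ℝ]) (W : Matrix (Fin m) (Fin p) ℍ[ℝ]) :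
    ipq (A * U) W = ipq U (Aᴴ * W) := by
  simp only [ipq, Matrix.mul_apply, sum_inner, inner_sum, Matrix.conjTranspose_apply,
    inner_mul_left_q]
  calc _ = ∑ i, ∑ l, ∑ j, inner ℝ (U l j) (star (A i l) * W i j) :=
        Finset.sum_congr rfl fun i _ => Finset.sum_comm
    _ = ∑ l, ∑ i, ∑ j, inner ℝ (U l j) (star (A i l) * W i j) := Finset.sum_comm
    _ = _ := Finset.sum_congr rfl fun i _ => Finset.sum_comm

theorem isUnit_gram {r n : ℕ} (B : Matrix (Fin r) (Fin n) ℍ[ℝ]) (lam : ℝ) (hlam : 0 < lam) :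
    IsUnit (B * Bᴴ + lam • (1 : Matrix (Fin r) (Fin r) ℍ[ℝ])) := by
  set P := B * Bᴴ + lam • (1 : Matrix (Fin r) (Fin r) ℍ[ℝ]) with hP
  have hinj : ∀ C : Matrix (Fin r) (Fin r) ℍ[ℝ], P * C = 0 → C = 0 := by
    intro C hC
    have h1 : ipq C (P * C) = frob (Bᴴ * C) ^ 2 + lam * frob C ^ 2 := by
      rw [hP, Matrix.add_mul, ipq_add, Matrix.smul_mul, Matrix.one_mul, ipq_smul, ipq_self,
        ← ipq_self (Bᴴ * C), ipq_mul_left, Matrix.conjTranspose_conjTranspose, Matrix.mul_assoc]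
    have h2 : ipq C (P * C) = 0 := by rw [hC]; simp [ipq]
    have h3 : frob C = 0 := by
      by_contra hne
      have : 0 < lam * frob C ^ 2 := by
        have := lt_of_le_of_ne (frob_nonneg C) (Ne.symm hne)
        positivity
      nlinarith [sq_nonneg (frob (Bᴴ * C))]
    ext1 i j
    have := norm_le_frob C i j
    rw [h3] at this
    exact norm_le_zero_iff.1 this
  let L := LinearMap.mulLeft ℝ P
  have hL : Function.Injective L := by
    rw [injective_iff_map_eq_zero]
    exact fun C hC => hinj C hC
  have : FiniteDimensional ℝ ℍ[ℝ] := inferInstance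
  have : FiniteDimensional ℝ (Matrix (Fin r) (Fin r) ℍ[ℝ]) := inferInstance
  obtain ⟨Q, hQ⟩ := (LinearMap.injective_iff_surjective.1 hL) 1
  have hQ' : P * Q = 1 := hQ
  have hQ2 : Q * P = 1 := by
    have : P * (Q * P - 1) = 0 := by
      rw [mul_sub, ← mul_assoc, hQ', one_mul, mul_one, sub_self]
    exact sub_eq_zero.1 (hinj _ this)
  exact ⟨⟨P, Q, hQ', hQ2⟩, rfl⟩

end helpers

abbrev TripE (m r n : ℕ) : Type :=
  (Fin m → Fin r → ℍ[ℝ]) × (Fin r → Fin n → ℍ[ℝ]) × (Fin m → Fin n → ℍ[ℝ])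

theorem abs_conv {E : Type*} [NormedAddCommGroup E] [ProperSpace E] (z : ℕ → E)
    (f : E → ℝ) (hf : Continuous f) (hf0 : ∀ x, 0 ≤ f x)
    (N : E → ℝ) (hN : Continuous N) (hN0 : N 0 = 0) (hNle : ∀ x, ‖x‖ ≤ N x)
    (R : ℝ) (hR : ∀ k, ‖z k‖ ≤ R)
    (c : ℝ) (hc : 0 < c) (hdec : ∀ k, c * N (z k - z (k + 1)) ^ 2 ≤ f (z k) - f (z (k + 1)))
    (hKL : ∀ w, (∃ φ : ℕ → ℕ, StrictMono φ ∧ Tendsto (fun i => N (z (φ i) - w)) atTop (nhds 0)) →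
      ∃ θ μ ρ : ℝ, (1 / 2 ≤ θ ∧ θ < 1) ∧ 0 < μ ∧ 0 < ρ ∧ ∀ k, N (z k - w) ≤ ρ →
        |f (z k) - f w| ^ θ ≤ μ * N (z k - z (k + 1))) :
    Summable (fun k => N (z k - z (k + 1))) ∧
      ∃ l, Tendsto (fun k => N (z k - l)) atTop (nhds 0) := by
  have hNnn : ∀ x, 0 ≤ N x := fun x => (norm_nonneg x).trans (hNle x)
  have hanti : Antitone (fun k => f (z k)) := by
    refine antitone_nat_of_succ_le fun k => ?_
    have := hdec k
    have : 0 ≤ c * N (z k - z (k + 1)) ^ 2 := by positivity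
    linarith
  obtain ⟨w, -, φ, hφ, hw⟩ := (isCompact_closedBall (0 : E) R).tendsto_subseq
    (x := z) (fun k => by simpa using hR k)
  have hNt : ∀ (u : ℕ → E) (l : E), Tendsto u atTop (nhds l) →
      Tendsto (fun i => N (u i - l)) atTop (nhds 0) := by
    intro u l hu
    have h1 : Tendsto (fun i => u i - l) atTop (nhds 0) := by
      simpa using hu.sub_const l
    have := (hN.tendsto 0).comp h1
    rwa [hN0] at this
  obtain ⟨θ, μ, ρ, ⟨hθ1, hθ2⟩, hμ, hρ, hKLw⟩ := hKL w ⟨φ, hφ, hNt _ _ hw⟩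
  -- s → 0
  have hfw : Tendsto (fun k => f (z k)) atTop (nhds (f w)) := by
    have h1 : Tendsto (fun k => f (z k)) atTop (nhds (⨅ k, f (z k))) :=
      tendsto_atTop_ciInf hanti ⟨0, by rintro _ ⟨k, rfl⟩; exact hf0 _⟩
    have h2 := h1.comp hφ.tendsto_atTop
    have h3 := (hf.tendsto w).comp hw
    have := tendsto_nhds_unique h2 h3
    rwa [this] at h1
  set s : ℕ → ℝ := fun k => f (z k) - f w with hs
  have hs0 : ∀ k, 0 ≤ s k := fun k => sub_nonneg.2 (hanti.le_of_tendsto hfw k)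
  have hst : Tendsto s atTop (nhds 0) := by simpa using hfw.sub_const (f w)
  set g : ℕ → ℝ := fun k => s k ^ (1 - θ) with hg
  have hg0 : ∀ k, 0 ≤ g k := fun k => Real.rpow_nonneg (hs0 k) _
  have hgt : Tendsto g atTop (nhds 0) := by
    have := hst.rpow_const (p := 1 - θ) (Or.inr (by linarith))
    rwa [Real.zero_rpow (by linarith)] at this
  set K := (1 - θ) * c / μ with hK
  have hKpos : 0 < K := by
    have : 0 < 1 - θ := by linarith
    positivity
  have key : ∀ k, N (z k - w) ≤ ρ → K * N (z k - z (k + 1)) ≤ g k - g (k + 1) := by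
    intro k hk
    have h1 := hKLw k hk
    have h2 := hdec k
    set d := N (z k - z (k + 1)) with hd
    have hd0 : 0 ≤ d := hNnn _
    have h2' : c * d ^ 2 ≤ s k - s (k + 1) := by simp only [hs]; linarith
    have h1' : s k ^ θ ≤ μ * d := by
      have : |f (z k) - f w| = s k := abs_of_nonneg (hs0 k)
      rwa [this] at h1
    rcases eq_or_lt_of_le (hs0 k) with h | h
    · have hs1 : s (k + 1) = 0 := by
        have := hs0 (k + 1)
        have : 0 ≤ c * d ^ 2 := by positivity
        linarith
      have hd2 : d = 0 := by
        by_contra hne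
        have : 0 < c * d ^ 2 := by positivity
        linarith
      simp [hg, hs1, ← h, hd2]
    · -- concavity
      have hb : (s (k + 1) / s k) ^ (1 - θ) ≤ 1 + (1 - θ) * (s (k + 1) / s k - 1) := by
        have := rpow_one_add_le_one_add_mul_self (s := s (k + 1) / s k - 1)
          (p := 1 - θ) (by
            have := div_nonneg (hs0 (k + 1)) h.le
            linarith) (by linarith) (by linarith)
        simpa using this
      rw [Real.div_rpow (hs0 _) h.le] at hb
      have hgp : 0 < s k ^ (1 - θ) := Real.rpow_pos_of_pos h _
      have hpp : 0 < s k ^ θ := Real.rpow_pos_of_pos h _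
      have hmul : s k ^ (1 - θ) * s k ^ θ = s k := by
        rw [← Real.rpow_add h]; simp
      have hb2 : s (k + 1) ^ (1 - θ) ≤
          s k ^ (1 - θ) + (1 - θ) * (s (k + 1) / s k - 1) * s k ^ (1 - θ) := by
        rw [div_le_iff₀ hgp] at hb
        linarith
      have hb3 : (s (k + 1) / s k - 1) * s k ^ (1 - θ) = - ((s k - s (k + 1)) / s k ^ θ) := by
        have : s k ^ (1 - θ) = s k / s k ^ θ := by
          rw [eq_div_iff hpp.ne', hmul]
        rw [this]
        field_simp
        ring
      have hdpos : 0 < d := by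
        by_contra hne
        have : d = 0 := le_antisymm (not_lt.1 hne) hd0
        rw [this] at h1'
        linarith
      have hb4 : c * d / μ ≤ (s k - s (k + 1)) / s k ^ θ := by
        rw [div_le_div_iff₀ hμ hpp]
        calc c * d * s k ^ θ ≤ c * d * (μ * d) := by gcongr
          _ = c * d ^ 2 * μ := by ring
          _ ≤ _ := by gcongr
      have : K * d = (1 - θ) * (c * d / μ) := by rw [hK]; ring
      rw [this]
      have h5 : (1 - θ) * (c * d / μ) ≤ (1 - θ) * ((s k - s (k + 1)) / s k ^ θ) :=
        mul_le_mul_of_nonneg_left hb4 (by linarith)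
      have h6 : (1 - θ) * (s (k + 1) / s k - 1) * s k ^ (1 - θ)
          = - ((1 - θ) * ((s k - s (k + 1)) / s k ^ θ)) := by
        rw [mul_assoc, hb3]; ring
      simp only [hg]
      linarith
  -- ball
  obtain ⟨ε, hε, hball⟩ : ∃ ε > 0, ∀ x : E, ‖x‖ < ε → N x ≤ ρ := by
    have : ∀ᶠ x in nhds (0 : E), N x < ρ :=
      (hN.tendsto 0).eventually (gt_mem_nhds (by rw [hN0]; exact hρ))
    obtain ⟨ε, hε, h⟩ := Metric.eventually_nhds_iff.1 this
    exact ⟨ε, hε, fun x hx => (h (by simpa using hx)).le⟩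
  obtain ⟨n0, hn0, hn0'⟩ : ∃ n0, ‖z n0 - w‖ < ε / 2 ∧ g n0 < K * (ε / 2) := by
    have e1 : ∀ᶠ i in atTop, ‖z (φ i) - w‖ < ε / 2 := by
      have := hw.eventually (Metric.ball_mem_nhds w (half_pos hε))
      filter_upwards [this] with i hi
      simpa [dist_eq_norm] using hi
    have e2 : ∀ᶠ i in atTop, g (φ i) < K * (ε / 2) :=
      (hgt.comp hφ.tendsto_atTop).eventually (gt_mem_nhds (by positivity))
    obtain ⟨i, h1, h2⟩ := (e1.and e2).exists
    exact ⟨φ i, h1, h2⟩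
  have hind : ∀ j, K * ‖z (n0 + j) - w‖ ≤ K * ‖z n0 - w‖ + (g n0 - g (n0 + j)) ∧
      ‖z (n0 + j) - w‖ < ε := by
    have hlt : ∀ j, K * ‖z (n0 + j) - w‖ ≤ K * ‖z n0 - w‖ + (g n0 - g (n0 + j)) →
        ‖z (n0 + j) - w‖ < ε := by
      intro j h
      have h1 := hg0 (n0 + j)
      have h2 : K * ‖z n0 - w‖ < K * (ε / 2) := mul_lt_mul_of_pos_left hn0 hKpos
      have : K * ‖z (n0 + j) - w‖ < K * ε := by linarith
      exact lt_of_mul_lt_mul_left this hKpos.le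
    intro j
    induction j with
    | zero => exact ⟨by simp, by simpa using hn0.trans (half_lt_self hε)⟩
    | succ j ih =>
      have hk := key (n0 + j) (hball _ ih.2)
      have h1 : ‖z (n0 + j + 1) - w‖ ≤ ‖z (n0 + j) - z (n0 + j + 1)‖ + ‖z (n0 + j) - w‖ := by
        have := norm_sub_le (z (n0 + j) - w) (z (n0 + j) - z (n0 + j + 1))
        have e : z (n0 + j) - w - (z (n0 + j) - z (n0 + j + 1)) = z (n0 + j + 1) - w := by abel
        rw [e] at this
        linarith
      have h2 := mul_le_mul_of_nonneg_left (h1.trans (add_le_add_left (hNle _) _)) hKpos.le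
      have h3 : K * ‖z (n0 + (j + 1)) - w‖ ≤ K * ‖z n0 - w‖ + (g n0 - g (n0 + (j + 1))) := by
        rw [← add_assoc]
        linarith [ih.1]
      exact ⟨h3, hlt _ h3⟩
  have hsum : Summable (fun k => N (z k - z (k + 1))) := by
    rw [← summable_nat_add_iff n0]
    refine summable_of_sum_range_le (c := g n0 / K) (fun _ => hNnn _) fun j => ?_
    rw [le_div_iff₀ hKpos]
    have : (∑ i ∈ Finset.range j, N (z (i + n0) - z (i + n0 + 1))) * K ≤ g n0 - g (n0 + j) := by
      induction j with
      | zero => simp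
      | succ j ih =>
        rw [Finset.sum_range_succ, add_mul]
        have := key (n0 + j) (hball _ (hind j).2)
        rw [add_comm j n0, ← add_assoc]
        linarith
    linarith [hg0 (n0 + j)]
  refine ⟨hsum, ?_⟩
  have hcs : CauchySeq z := by
    refine cauchySeq_of_summable_dist (Summable.of_nonneg_of_le (fun _ => dist_nonneg)
      (fun k => ?_) hsum)
    rw [dist_eq_norm]
    exact hNle _
  obtain ⟨l, hl⟩ := cauchySeq_tendsto_of_complete hcs
  exact ⟨l, hNt _ _ hl⟩

/-- A bounded LRQD sequence satisfying the Kurdyka–Łojasiewicz inequality near each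
of its limit points has finite length, hence converges. -/
theorem LRQD_global_convergence {m r n : ℕ}
    (D : Matrix (Fin m) (Fin n) ℍ[ℝ]) (Ω : Set (Fin m × Fin n)) [DecidablePred (· ∈ Ω)]
    (lam : ℝ) (hlam : 0 < lam)
    (A : ℕ → Matrix (Fin m) (Fin r) ℍ[ℝ]) (B : ℕ → Matrix (Fin r) (Fin n) ℍ[ℝ])
    (X : ℕ → Matrix (Fin m) (Fin n) ℍ[ℝ])
    (hXin : ∀ k, ∀ p ∈ Ω, X k p.1 p.2 = D p.1 p.2)
    (hXout : ∀ k, ∀ p : Fin m × Fin n, p ∉ Ω → X k p.1 p.2 = (A k * B k) p.1 p.2)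
    (hA : ∀ k, A (k + 1) = (X k * (B k)ᴴ + lam • A k) *
      Ring.inverse (B k * (B k)ᴴ + lam • (1 : Matrix (Fin r) (Fin r) ℍ[ℝ])))
    (hB : ∀ k, B (k + 1) =
      Ring.inverse ((A (k + 1))ᴴ * A (k + 1) + lam • (1 : Matrix (Fin r) (Fin r) ℍ[ℝ])) *
      ((A (k + 1))ᴴ * X k + lam • B k))
    (hbdd : ∃ M : ℝ, ∀ k, frob (A k) ≤ M ∧ frob (B k) ≤ M ∧ frob (X k) ≤ M)
    (hKL : ∀ (Asharp : Matrix (Fin m) (Fin r) ℍ[ℝ]) (Bsharp : Matrix (Fin r) (Fin n) ℍ[ℝ])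
      (Xsharp : Matrix (Fin m) (Fin n) ℍ[ℝ]),
      (∃ φ : ℕ → ℕ, StrictMono φ ∧
        Tendsto (fun i => tnorm (A (φ i) - Asharp) (B (φ i) - Bsharp) (X (φ i) - Xsharp))
          atTop (nhds 0)) →
      ∃ θ μ ρ : ℝ, (1 / 2 ≤ θ ∧ θ < 1) ∧ 0 < μ ∧ 0 < ρ ∧
        ∀ (A' : Matrix (Fin m) (Fin r) ℍ[ℝ]) (B' : Matrix (Fin r) (Fin n) ℍ[ℝ])
          (X' : Matrix (Fin m) (Fin n) ℍ[ℝ]), (∀ p ∈ Ω, X' p.1 p.2 = D p.1 p.2) →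
          tnorm (A' - Asharp) (B' - Bsharp) (X' - Xsharp) ≤ ρ →
          |(1 / 2) * frob (A' * B' - X') ^ 2 -
            (1 / 2) * frob (Asharp * Bsharp - Xsharp) ^ 2| ^ θ ≤ μ * pgnorm Ω A' B' X') :
    Summable (fun k => tnorm (A k - A (k + 1)) (B k - B (k + 1)) (X k - X (k + 1))) ∧
    ∃ (Alim : Matrix (Fin m) (Fin r) ℍ[ℝ]) (Blim : Matrix (Fin r) (Fin n) ℍ[ℝ])
      (Xlim : Matrix (Fin m) (Fin n) ℍ[ℝ]),
      Tendsto (fun k => tnorm (A k - Alim) (B k - Blim) (X k - Xlim)) atTop (nhds 0) := by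
  obtain ⟨M, hM⟩ := hbdd
  have hM0 : 0 ≤ M := (frob_nonneg _).trans (hM 0).1
  -- normal equations
  have nA : ∀ k, (A (k + 1) * B k - X k) * (B k)ᴴ = lam • (A k - A (k + 1)) := by
    intro k
    have h := congrArg (· * (B k * (B k)ᴴ + lam • (1 : Matrix (Fin r) (Fin r) ℍ[ℝ]))) (hA k)
    simp only [Matrix.mul_assoc, Ring.inverse_mul_cancel _ (isUnit_gram (B k) lam hlam)] at h
    rw [Matrix.mul_one, Matrix.mul_add, Matrix.mul_smul, Matrix.mul_one] at h
    rw [Matrix.sub_mul, Matrix.mul_assoc, smul_sub, sub_eq_sub_iff_add_eq_add, h, add_comm]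
  have nB : ∀ k, (A (k + 1))ᴴ * (A (k + 1) * B (k + 1) - X k) = lam • (B k - B (k + 1)) := by
    intro k
    have hu := isUnit_gram (A (k + 1))ᴴ lam hlam
    rw [Matrix.conjTranspose_conjTranspose] at hu
    have h := congrArg (((A (k + 1))ᴴ * A (k + 1) + lam • (1 : Matrix (Fin r) (Fin r) ℍ[ℝ])) * ·)
      (hB k)
    simp only [← Matrix.mul_assoc, Ring.mul_inverse_cancel _ hu] at h
    rw [Matrix.one_mul, Matrix.add_mul, Matrix.smul_mul, Matrix.one_mul] at h
    rw [Matrix.mul_sub, ← Matrix.mul_assoc, smul_sub, sub_eq_sub_iff_add_eq_add, h, add_comm]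
  -- decrease
  have dA : ∀ k, frob (A (k + 1) * B k - X k) ^ 2 + 2 * lam * frob (A k - A (k + 1)) ^ 2
      ≤ frob (A k * B k - X k) ^ 2 := by
    intro k
    have e : A k * B k - X k = (A k - A (k + 1)) * B k + (A (k + 1) * B k - X k) := by
      rw [Matrix.sub_mul]; abel
    rw [e, frob_add_sq, ipq_mul_right, nA, ipq_smul, ipq_self]
    nlinarith [sq_nonneg (frob ((A k - A (k + 1)) * B k))]
  have dB : ∀ k, frob (A (k + 1) * B (k + 1) - X k) ^ 2 + 2 * lam * frob (B k - B (k + 1)) ^ 2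
      ≤ frob (A (k + 1) * B k - X k) ^ 2 := by
    intro k
    have e : A (k + 1) * B k - X k
        = A (k + 1) * (B k - B (k + 1)) + (A (k + 1) * B (k + 1) - X k) := by
      rw [Matrix.mul_sub]; abel
    rw [e, frob_add_sq, ipq_mul_left, nB, ipq_smul, ipq_self]
    nlinarith [sq_nonneg (frob (A (k + 1) * (B k - B (k + 1))))]
  have dX : ∀ k, frob (A (k + 1) * B (k + 1) - X (k + 1)) ^ 2 + frob (X k - X (k + 1)) ^ 2
      ≤ frob (A (k + 1) * B (k + 1) - X k) ^ 2 := by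
    intro k
    simp only [frob_sq, ← Finset.sum_add_distrib]
    refine Finset.sum_le_sum fun i _ => Finset.sum_le_sum fun j _ => ?_
    simp only [Matrix.sub_apply]
    by_cases hp : (i, j) ∈ Ω
    · have h1 : X k i j = D i j := hXin k (i, j) hp
      have h2 : X (k + 1) i j = D i j := hXin (k + 1) (i, j) hp
      rw [h1, h2]; simp
    · have h2 : X (k + 1) i j = (A (k + 1) * B (k + 1)) i j := hXout (k + 1) (i, j) hp
      rw [h2, sub_self, norm_sub_rev (X k i j)]; simp
  -- gradient bound
  set d : ℕ → ℝ := fun k => tnorm (A k - A (k + 1)) (B k - B (k + 1)) (X k - X (k + 1)) with hd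
  have dsq : ∀ k, d k ^ 2 = frob (A k - A (k + 1)) ^ 2 + frob (B k - B (k + 1)) ^ 2
      + frob (X k - X (k + 1)) ^ 2 := fun k => Real.sq_sqrt (by positivity)
  have d0 : ∀ k, 0 ≤ d k := fun k => Real.sqrt_nonneg _
  have dAle : ∀ k, frob (A k - A (k + 1)) ≤ d k := fun k => by
    refine le_of_sq_le_sq ?_ (d0 k)
    rw [dsq]
    nlinarith [sq_nonneg (frob (B k - B (k + 1))), sq_nonneg (frob (X k - X (k + 1)))]
  have dBle : ∀ k, frob (B k - B (k + 1)) ≤ d k := fun k => by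
    refine le_of_sq_le_sq ?_ (d0 k)
    rw [dsq]
    nlinarith [sq_nonneg (frob (A k - A (k + 1))), sq_nonneg (frob (X k - X (k + 1)))]
  obtain ⟨C, hC, hgrad⟩ : ∃ C > 0, ∀ k, pgnorm Ω (A k) (B k) (X k) ≤ C * d k := by
    refine ⟨(lam + M * M) + (lam + (M * M + M) + M * (M + M)), by positivity, fun k => ?_⟩
    have g1 : frob ((A k * B k - X k) * (B k)ᴴ) ≤ (lam + M * M) * d k := by
      have e : (A k * B k - X k) * (B k)ᴴ
          = lam • (A k - A (k + 1)) + (A k - A (k + 1)) * (B k * (B k)ᴴ) := by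
        rw [← nA, ← Matrix.mul_assoc, ← Matrix.add_mul, Matrix.sub_mul (A k)]
        congr 1
        abel
      rw [e]
      refine (frob_add_le _ _).trans ?_
      rw [frob_smul _ hlam.le]
      have h1 : frob (B k * (B k)ᴴ) ≤ M * M := by
        refine (frob_mul_le _ _).trans ?_
        rw [frob_conjT]
        exact mul_le_mul (hM k).2.1 (hM k).2.1 (frob_nonneg _) hM0
      have h2 : frob ((A k - A (k + 1)) * (B k * (B k)ᴴ)) ≤ d k * (M * M) :=
        (frob_mul_le _ _).trans (mul_le_mul (dAle k) h1 (frob_nonneg _) (d0 k))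
      have h3 := mul_le_mul_of_nonneg_left (dAle k) hlam.le
      linarith
    have g2 : frob ((A k)ᴴ * (A k * B k - X k))
        ≤ (lam + (M * M + M) + M * (M + M)) * d k := by
      have e : (A k)ᴴ * (A k * B k - X k)
          = lam • (B k - B (k + 1)) + (A k - A (k + 1))ᴴ * (A k * B k - X k)
            + (A (k + 1))ᴴ * ((A k - A (k + 1)) * B k + A (k + 1) * (B k - B (k + 1))) := by
        rw [← nB, Matrix.conjTranspose_sub]
        simp only [Matrix.sub_mul, Matrix.mul_sub, Matrix.mul_add]
        abel
      rw [e]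
      have h1 : frob (A k * B k - X k) ≤ M * M + M := by
        rw [sub_eq_add_neg]
        refine (frob_add_le _ _).trans ?_
        rw [frob_neg]
        exact add_le_add ((frob_mul_le _ _).trans
          (mul_le_mul (hM k).1 (hM k).2.1 (frob_nonneg _) hM0)) (hM k).2.2
      have h2 : frob ((A k - A (k + 1))ᴴ * (A k * B k - X k)) ≤ d k * (M * M + M) := by
        refine (frob_mul_le _ _).trans ?_
        rw [frob_conjT]
        exact mul_le_mul (dAle k) h1 (frob_nonneg _) (d0 k)
      have h3 : frob ((A k - A (k + 1)) * B k + A (k + 1) * (B k - B (k + 1)))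
          ≤ d k * M + M * d k :=
        (frob_add_le _ _).trans (add_le_add
          ((frob_mul_le _ _).trans (mul_le_mul (dAle k) (hM k).2.1 (frob_nonneg _) (d0 k)))
          ((frob_mul_le _ _).trans (mul_le_mul (hM (k + 1)).1 (dBle k) (frob_nonneg _) hM0)))
      have h4 : frob ((A (k + 1))ᴴ * ((A k - A (k + 1)) * B k + A (k + 1) * (B k - B (k + 1))))
          ≤ M * (d k * M + M * d k) := by
        refine (frob_mul_le _ _).trans ?_
        rw [frob_conjT]
        exact mul_le_mul (hM (k + 1)).1 h3 (frob_nonneg _) hM0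
      have h5 : frob (lam • (B k - B (k + 1))) ≤ lam * d k := by
        rw [frob_smul _ hlam.le]
        exact mul_le_mul_of_nonneg_left (dBle k) hlam.le
      refine (frob_add_le _ _).trans ((add_le_add ((frob_add_le _ _).trans
        (add_le_add h5 h2)) h4).trans (le_of_eq ?_))
      ring
    have g3 : (∑ p : Fin m × Fin n, if p ∈ Ω then (0 : ℝ)
        else ‖(X k - A k * B k) p.1 p.2‖ ^ 2) = 0 := by
      refine Finset.sum_eq_zero fun p _ => ?_
      split_ifs with hp
      · rfl
      · rw [Matrix.sub_apply, hXout k p hp]; simp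
    rw [pgnorm, g3, add_zero]
    refine (Real.sqrt_le_left (add_nonneg ((frob_nonneg _).trans g1) ((frob_nonneg _).trans g2))).2 ?_ |>.trans (le_of_eq (add_mul _ _ _).symm)
    have q1 := frob_nonneg ((A k * B k - X k) * (B k)ᴴ)
    have q2 := frob_nonneg ((A k)ᴴ * (A k * B k - X k))
    have hh := pow_le_pow_left₀ (add_nonneg q1 q2) (add_le_add g1 g2) 2
    nlinarith [mul_nonneg q1 q2]
  -- abstract convergence
  have : ProperSpace (TripE m r n) := FiniteDimensional.proper ℝ _
  let z : ℕ → TripE m r n := fun k => (A k, B k, X k)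
  let N : TripE m r n → ℝ := fun x => tnorm (Matrix.of x.1) (Matrix.of x.2.1) (Matrix.of x.2.2)
  let f : TripE m r n → ℝ := fun x =>
    (1 / 2) * frob (Matrix.of x.1 * Matrix.of x.2.1 - Matrix.of x.2.2) ^ 2
  have hfc : Continuous f := by
    simp only [f, frob_sq, Matrix.sub_apply, Matrix.mul_apply, Matrix.of_apply]
    fun_prop
  have hNc : Continuous N := by
    simp only [N, tnorm, frob_sq, Matrix.of_apply]
    fun_prop
  have hN0 : N 0 = 0 := by
    simp [N, tnorm, frob]
  have hNle : ∀ x, ‖x‖ ≤ N x := by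
    intro x
    have hb : ∀ (p q : ℕ) (y : Fin p → Fin q → ℍ[ℝ]), ‖y‖ ≤ frob (Matrix.of y) := by
      intro p q y
      refine (pi_norm_le_iff_of_nonneg (frob_nonneg _)).2 fun i => ?_
      refine (pi_norm_le_iff_of_nonneg (frob_nonneg _)).2 fun j => ?_
      exact norm_le_frob (Matrix.of y) i j
    have h1 : frob (Matrix.of x.1) ≤ N x := Real.le_sqrt_of_sq_le (by
      nlinarith [sq_nonneg (frob (Matrix.of x.2.1)), sq_nonneg (frob (Matrix.of x.2.2))])
    have h2 : frob (Matrix.of x.2.1) ≤ N x := Real.le_sqrt_of_sq_le (by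
      nlinarith [sq_nonneg (frob (Matrix.of x.1)), sq_nonneg (frob (Matrix.of x.2.2))])
    have h3 : frob (Matrix.of x.2.2) ≤ N x := Real.le_sqrt_of_sq_le (by
      nlinarith [sq_nonneg (frob (Matrix.of x.1)), sq_nonneg (frob (Matrix.of x.2.1))])
    exact norm_prod_le_iff.2 ⟨(hb _ _ _).trans h1,
      norm_prod_le_iff.2 ⟨(hb _ _ _).trans h2, (hb _ _ _).trans h3⟩⟩
  have hR : ∀ k, ‖z k‖ ≤ Real.sqrt (M ^ 2 + M ^ 2 + M ^ 2) := by
    intro k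
    refine (hNle _).trans (Real.sqrt_le_sqrt ?_)
    exact add_le_add (add_le_add (pow_le_pow_left₀ (frob_nonneg _) (hM k).1 2)
      (pow_le_pow_left₀ (frob_nonneg _) (hM k).2.1 2))
      (pow_le_pow_left₀ (frob_nonneg _) (hM k).2.2 2)
  have hdec : ∀ k, min lam (1 / 2) * N (z k - z (k + 1)) ^ 2 ≤ f (z k) - f (z (k + 1)) := by
    intro k
    change min lam (1 / 2) * d k ^ 2 ≤ (1 / 2) * frob (A k * B k - X k) ^ 2
      - (1 / 2) * frob (A (k + 1) * B (k + 1) - X (k + 1)) ^ 2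
    rw [dsq]
    have a1 := mul_le_mul_of_nonneg_right (min_le_left lam (1 / 2))
      (sq_nonneg (frob (A k - A (k + 1))))
    have a2 := mul_le_mul_of_nonneg_right (min_le_left lam (1 / 2))
      (sq_nonneg (frob (B k - B (k + 1))))
    have a3 := mul_le_mul_of_nonneg_right (min_le_right lam (1 / 2))
      (sq_nonneg (frob (X k - X (k + 1))))
    linarith [dA k, dB k, dX k]
  have hfin := abs_conv z f hfc (fun x => by positivity) N hNc hN0 hNle _ hR
    (min lam (1 / 2)) (lt_min hlam (by norm_num)) hdec (by
      rintro ⟨a, b, x⟩ ⟨φ, hφ, hφt⟩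
      obtain ⟨θ, μ, ρ, hθ, hμ, hρ, h⟩ := hKL a b x ⟨φ, hφ, hφt⟩
      refine ⟨θ, μ * C, ρ, hθ, mul_pos hμ hC, hρ, fun k hk => ?_⟩
      refine (h (A k) (B k) (X k) (hXin k) hk).trans ?_
      rw [mul_assoc]
      exact mul_le_mul_of_nonneg_left (hgrad k) hμ.le)
  obtain ⟨hs, ⟨a, b, x⟩, hl⟩ := hfin
  exact ⟨hs, a, b, x, hl⟩
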